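/- There exists a constant C > 0 such that for every L > 2, the function f_L = χ_{R_L} − χ_{R₀} belongs to H¹ and satisfies ‖f_L‖_{H¹} ≤ C log L. -/

import Mathlib

open MeasureTheory Real Filter Set
open scoped ENNReal

noncomputable section

/-- The group `G = ℝ² ⋊ ℝ⁺`, realized as triples `(x₁, x₂, a)` (only `a > 0` is relevant). -/
abbrev G : Type := ℝ × ℝ × ℝ

/-- Group product `(x₁,x₂,a)·(x₁',x₂',a') = (x₁+a x₁', x₂+a x₂', a a')`. -/
def gMul (x y : G) : G := (x.1 + x.2.2 * y.1, x.2.1 + x.2.2 * y.2.1, x.2.2 * y.2.2)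

/-- Group inverse `(x₁,x₂,a)⁻¹ = (−x₁/a, −x₂/a, 1/a)`. -/
def gInv (x : G) : G := (-x.1 / x.2.2, -x.2.1 / x.2.2, 1 / x.2.2)

/-- The identity `e = (0,0,1)`. -/
def gE : G := (0, 0, 1)

/-- The right Haar measure `dρ = a⁻¹ dx₁ dx₂ da` (supported where `a > 0`). -/
def ρG : Measure G :=
  (volume : Measure G).withDensity fun x => ENNReal.ofReal (if 0 < x.2.2 then x.2.2⁻¹ else 0)

/-- The modular function `δ(x₁,x₂,a) = a⁻²`. -/
def deltaG (x : G) : ℝ := (x.2.2 ^ 2)⁻¹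

/-- `|x| = √(x₁² + x₂²)`. -/
def normG (x : G) : ℝ := Real.sqrt (x.1 ^ 2 + x.2.1 ^ 2)

/-- `cosh r(x) = (a + a⁻¹ + a⁻¹|x|²)/2`. -/
def coshArg (x : G) : ℝ := (x.2.2 + x.2.2⁻¹ + x.2.2⁻¹ * (x.1 ^ 2 + x.2.1 ^ 2)) / 2

/-- `r(x) ≥ 0` is determined by `cosh r(x) = coshArg x`; explicitly `r = arcosh (coshArg x)`. -/
def rG (x : G) : ℝ := Real.log (coshArg x + Real.sqrt (coshArg x ^ 2 - 1))

/-- The left-invariant distance `d(x,y) = r(x⁻¹y)`. -/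
def dG (x y : G) : ℝ := rG (gMul (gInv x) y)

/-- The heat kernel
`p_t(x) = (8π^{3/2})⁻¹ δ(x)^{1/2} (r(x)/sinh r(x)) t^{−3/2} exp(−r(x)²/(4t))`,
with `r/sinh r := 1` at `x = e`. -/
def heatK (t : ℝ) (x : G) : ℝ :=
  (8 * Real.pi ^ ((3 : ℝ)/2))⁻¹ * Real.sqrt (deltaG x) *
    (if rG x = 0 then 1 else rG x / Real.sinh (rG x)) *
    t ^ (-(3 : ℝ)/2) * Real.exp (-(rG x ^ 2) / (4 * t))

/-- Convolution `f ∗ p_t(x) = ∫ f(xy⁻¹) p_t(y) dρ(y)`. -/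
def convHeat (f : G → ℝ) (t : ℝ) (x : G) : ℝ := ∫ y, f (gMul x (gInv y)) * heatK t y ∂ρG

/-- The heat maximal operator `Mf(x) = sup_{t>0} |f ∗ p_t(x)|` (valued in `ℝ≥0∞`). -/
def maxHeat (f : G → ℝ) (x : G) : ℝ≥0∞ :=
  ⨆ (t : ℝ) (_ : 0 < t), ENNReal.ofReal |convHeat f t x|

/-- Calderón–Zygmund sets. -/
def IsCZ (R : Set G) : Prop :=
  ∃ c : G, ∃ L r : ℝ, 0 < c.2.2 ∧ 0 < L ∧ 0 < r ∧
    R = Set.Icc (c.1 - L/2) (c.1 + L/2) ×ˢ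
        (Set.Icc (c.2.1 - L/2) (c.2.1 + L/2) ×ˢ
         Set.Icc (c.2.2 * Real.exp (-r)) (c.2.2 * Real.exp r)) ∧
    (r < 1 → Real.exp 2 * c.2.2 * r ≤ L ∧ L < Real.exp 8 * c.2.2 * r) ∧
    (1 ≤ r → c.2.2 * Real.exp (2*r) ≤ L ∧ L < c.2.2 * Real.exp (8*r))

/-- Atoms: `A ∈ L¹(ρ)` supported in a Calderón–Zygmund set `R`, with
`‖A‖_∞ ≤ ρ(R)⁻¹` and `∫ A dρ = 0`. -/
def IsAtomG (A : G → ℝ) : Prop :=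
  Integrable A ρG ∧
  ∃ R : Set G, IsCZ R ∧ (∀ x ∉ R, A x = 0) ∧
    eLpNorm A ⊤ ρG ≤ (ρG R)⁻¹ ∧
    ∫ x, A x ∂ρG = 0

/-- `f = Σ_j lam_j A_j` with atoms `A_j`, `Σ_j |lam_j| < ∞`, converging in `L¹(ρ)`. -/
def IsH1Decomp (f : G → ℝ) (lam : ℕ → ℝ) (A : ℕ → G → ℝ) : Prop :=
  (∀ j, IsAtomG (A j)) ∧ Summable (fun j => |lam j|) ∧
  Tendsto (fun N => eLpNorm (fun x => f x - ∑ j ∈ Finset.range N, lam j * A j x) 1 ρG)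
    atTop (nhds 0)

/-- The Hardy space `H¹`. -/
def MemH1 (f : G → ℝ) : Prop :=
  Integrable f ρG ∧ ∃ lam A, IsH1Decomp f lam A

/-- `‖f‖_{H¹} = inf Σ_j |lam_j|` over all atomic decompositions. -/
def H1norm (f : G → ℝ) : ℝ :=
  sInf {s | ∃ lam A, IsH1Decomp f lam A ∧ s = ∑' j, |lam j|}

/-- The left-invariant vector field `X₀ = a ∂_a`. -/
def X0 (f : G → ℝ) (x : G) : ℝ := x.2.2 * deriv (fun s => f (x.1, x.2.1, s)) x.2.2

/-- The left-invariant vector field `X₁ = a ∂_{x₁}`. -/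
def X1 (f : G → ℝ) (x : G) : ℝ := x.2.2 * deriv (fun s => f (s, x.2.1, x.2.2)) x.1

/-- The left-invariant vector field `X₂ = a ∂_{x₂}`. -/
def X2 (f : G → ℝ) (x : G) : ℝ := x.2.2 * deriv (fun s => f (x.1, s, x.2.2)) x.2.1

/-- `‖∇p_t(x)‖`, the Euclidean norm of `(X₀p_t, X₁p_t, X₂p_t)` at `x`. -/
def gradHeatNorm (t : ℝ) (x : G) : ℝ :=
  Real.sqrt (X0 (heatK t) x ^ 2 + X1 (heatK t) x ^ 2 + X2 (heatK t) x ^ 2)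

/-- The Poisson kernel `q_t(x) = π⁻² δ(x)^{1/2} (r(x)/sinh r(x)) · t/(t²+r(x)²)²`. -/
def poissonK (t : ℝ) (x : G) : ℝ :=
  (Real.pi ^ 2)⁻¹ * Real.sqrt (deltaG x) *
    (if rG x = 0 then 1 else rG x / Real.sinh (rG x)) *
    (t / (t ^ 2 + rG x ^ 2) ^ 2)

/-- Convolution `f ∗ q_t(x) = ∫ f(xy⁻¹) q_t(y) dρ(y)`. -/
def convPoisson (f : G → ℝ) (t : ℝ) (x : G) : ℝ := ∫ y, f (gMul x (gInv y)) * poissonK t y ∂ρG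

/-- The Poisson maximal operator `M̃f(x) = sup_{t>0} |f ∗ q_t(x)|`. -/
def maxPoisson (f : G → ℝ) (x : G) : ℝ≥0∞ :=
  ⨆ (t : ℝ) (_ : 0 < t), ENNReal.ofReal |convPoisson f t x|

/-- `G_{r₁}(x) = sup_{z ∈ B(x,r₁/2)} sup_{t>0} ‖∇p_t(z)‖`. -/
def Gsup (r1 : ℝ) (x : G) : ℝ≥0∞ :=
  ⨆ (z : G) (_ : 0 < z.2.2 ∧ dG x z < r1 / 2) (t : ℝ) (_ : 0 < t),
    ENNReal.ofReal (gradHeatNorm t z)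

/-- `R₀ = [−1,1]×[−1,1]×[e⁻¹,e]`. -/
def R0set : Set G :=
  Set.Icc (-1 : ℝ) 1 ×ˢ (Set.Icc (-1 : ℝ) 1 ×ˢ Set.Icc (Real.exp (-1)) (Real.exp 1))

/-- `R_L = [L−1,L+1]×[−1,1]×[e⁻¹,e]`. -/
def RLset (L : ℝ) : Set G :=
  Set.Icc (L - 1) (L + 1) ×ˢ (Set.Icc (-1 : ℝ) 1 ×ˢ Set.Icc (Real.exp (-1)) (Real.exp 1))

/-- `f_L = χ_{R_L} − χ_{R₀}`. -/
def fL (L : ℝ) : G → ℝ := fun x =>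
  (RLset L).indicator (fun _ => (1 : ℝ)) x - R0set.indicator (fun _ => (1 : ℝ)) x

/-- The mean of `g` over `R` with respect to `ρ`. -/
def czMean (g : G → ℝ) (R : Set G) : ℝ := (∫ x in R, g x ∂ρG) / (ρG R).toReal

/-- `‖g‖_{BMO} = sup_R ρ(R)⁻¹ ∫_R |g − g_R| dρ` over Calderón–Zygmund sets `R`. -/
def czBMO (g : G → ℝ) : ℝ≥0∞ :=
  ⨆ (R : Set G) (_ : IsCZ R),
    (ρG R)⁻¹ * ∫⁻ x in R, ENNReal.ofReal |g x - czMean g R| ∂ρG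

/-- `‖h‖_{BMO(ℝ)} = sup_Q |Q|⁻¹ ∫_Q |h − h_Q|` over bounded intervals `Q ⊂ ℝ`. -/
def lineBMO (h : ℝ → ℝ) : ℝ≥0∞ :=
  ⨆ (a : ℝ) (b : ℝ) (_ : a < b),
    (ENNReal.ofReal (b - a))⁻¹ *
      ∫⁻ s in Set.Icc a b, ENNReal.ofReal |h s - (∫ u in Set.Icc a b, h u) / (b - a)|

/-- `2R₀ = [−2,2]×[−2,2]×[e⁻²,e²]`. -/
def twoR0set : Set G :=
  Set.Icc (-2 : ℝ) 2 ×ˢ (Set.Icc (-2 : ℝ) 2 ×ˢ Set.Icc (Real.exp (-2)) (Real.exp 2))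

/-- The set `{x₁ > 3, |x₂| < 1, e⁻¹ < a < e}`. -/
def domSpecial : Set G :=
  {x : G | 3 < x.1 ∧ |x.2.1| < 1 ∧ Real.exp (-1) < x.2.2 ∧ x.2.2 < Real.exp 1}

/-- The function equal to `1/(x₁ (log x₁)^{3/2})` on `{x₁ > 3, |x₂| < 1, e⁻¹ < a < e}`,
to `c₀` on `R₀`, and `0` elsewhere. -/
def fSpecial (c0 : ℝ) : G → ℝ := fun x =>
  domSpecial.indicator (fun y => (y.1 * Real.log y.1 ^ ((3 : ℝ)/2))⁻¹) x
    + R0set.indicator (fun _ => c0) x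

/-!
Along the boxes `czBox p k`, whose side grows like `e ^ (4 k)` while their logarithmic height is
only `2 (k + 1)`, the measure `ρG` grows by at most a bounded factor at each step, so the uniform
densities of consecutive boxes differ by a bounded multiple of an atom. After about `log L` steps
the boxes around `(0, 0)` and `(L, 0)` lie in a common Calderón–Zygmund set of comparable measure,
and their uniform densities again differ by a bounded multiple of an atom. Telescoping writes `f_L`
as a sum of `O(log L)` atoms with bounded coefficients.
-/

open scoped Topology

section UniformDensity

variable {α : Type*} [MeasurableSpace α] {μ : Measure α} {s : Set α}

/-- The density with respect to `μ` of the uniform probability measure on `s`, as a real-valued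
function. It is `0` when `s` has measure `0` or `∞`. -/
def uniformDensity (μ : Measure α) (s : Set α) : α → ℝ :=
  s.indicator fun _ => (μ.real s)⁻¹

lemma uniformDensity_of_notMem {x : α} (hx : x ∉ s) : uniformDensity μ s x = 0 :=
  indicator_of_notMem hx _

lemma uniformDensity_nonneg (x : α) : 0 ≤ uniformDensity μ s x :=
  indicator_nonneg (fun _ _ => inv_nonneg.2 measureReal_nonneg) x

lemma uniformDensity_le (x : α) : uniformDensity μ s x ≤ (μ.real s)⁻¹ :=
  indicator_le_self' (fun _ _ => inv_nonneg.2 measureReal_nonneg) x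

lemma integrable_uniformDensity (hs : MeasurableSet s) (hμs : μ s ≠ ∞) :
    Integrable (uniformDensity μ s) μ :=
  (integrable_indicator_iff hs).2 (integrableOn_const hμs)

lemma integral_uniformDensity (hs : MeasurableSet s) (hμs : μ.real s ≠ 0) :
    ∫ x, uniformDensity μ s x ∂μ = 1 := by
  rw [uniformDensity, integral_indicator_const _ hs, smul_eq_mul, mul_inv_cancel₀ hμs]

lemma measureReal_smul_uniformDensity (hμs : μ.real s ≠ 0) :
    μ.real s • uniformDensity μ s = s.indicator fun _ => 1 := by
  ext x
  rw [uniformDensity, Pi.smul_apply, ← indicator_const_smul_apply, smul_eq_mul,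
    mul_inv_cancel₀ hμs]

end UniformDensity

section L1Sums

variable {α E ι : Type*} [MeasurableSpace α] {μ : Measure α} [NormedAddCommGroup E]

lemma toL1_finsetSum {a : ι → α → E} (ha : ∀ i, Integrable (a i) μ) (s : Finset ι) :
    (integrable_finsetSum' s fun i _ => ha i).toL1 (∑ i ∈ s, a i)
      = ∑ i ∈ s, (ha i).toL1 (a i) := by
  classical
  induction s using Finset.induction_on with
  | empty => simp
  | insert i s hi ih =>
    simp only [Finset.sum_insert hi, ← ih]
    exact Integrable.toL1_add _ _ _ _

lemma tendsto_eLpNorm_sub_sum_iff {f : α → E} {a : ℕ → α → E} (hf : Integrable f μ)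
    (ha : ∀ j, Integrable (a j) μ) :
    Tendsto (fun N => eLpNorm (fun x => f x - ∑ j ∈ Finset.range N, a j x) 1 μ) atTop (𝓝 0) ↔
      Tendsto (fun N => ∑ j ∈ Finset.range N, (ha j).toL1 (a j)) atTop (𝓝 (hf.toL1 f)) := by
  simp only [← toL1_finsetSum ha]
  refine Iff.trans ?_ (Lp.tendsto_Lp_iff_tendsto_eLpNorm'' _
    (fun N => memLp_one_iff_integrable.2 (integrable_finsetSum' _ fun j _ => ha j)) f
    (memLp_one_iff_integrable.2 hf)).symm
  refine iff_of_eq (congrArg (Tendsto · _ _) (funext fun N => ?_))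
  rw [eLpNorm_sub_comm]
  congr 1
  ext x
  simp

end L1Sums

section HaarMeasure

/-- The multiplicative Haar measure `da / a` on `(0, ∞)`, the vertical factor of `ρG`. -/
def haarPos : Measure ℝ :=
  volume.withDensity fun a => ENNReal.ofReal (if 0 < a then a⁻¹ else 0)

instance : SFinite haarPos := by
  unfold haarPos
  infer_instance

lemma ρG_eq_prod : ρG = (volume : Measure ℝ).prod ((volume : Measure ℝ).prod haarPos) := by
  have hw : Measurable fun a : ℝ => ENNReal.ofReal (if 0 < a then a⁻¹ else 0) :=
    (Measurable.ite measurableSet_Ioi measurable_inv measurable_const).ennreal_ofReal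
  rw [haarPos, prod_withDensity_right hw]
  exact (prod_withDensity_right (hw.comp measurable_snd)).symm

lemma haarPos_Icc {a b : ℝ} (ha : 0 < a) (hab : a ≤ b) :
    haarPos (Icc a b) = ENNReal.ofReal (log (b / a)) := by
  have hpos : ∀ x ∈ Icc a b, 0 < x := fun x hx => ha.trans_le hx.1
  have hint : IntegrableOn (fun x : ℝ => x⁻¹) (Icc a b) :=
    (continuousOn_inv₀.mono fun x hx => (hpos x hx).ne').integrableOn_compact isCompact_Icc
  calc haarPos (Icc a b)
      = ∫⁻ x in Icc a b, ENNReal.ofReal (if 0 < x then x⁻¹ else 0) :=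
        withDensity_apply _ measurableSet_Icc
    _ = ∫⁻ x in Icc a b, ENNReal.ofReal x⁻¹ :=
        setLIntegral_congr_fun measurableSet_Icc fun x hx => by simp only [hpos x hx, if_true]
    _ = ENNReal.ofReal (∫ x in Icc a b, x⁻¹) :=
        (ofReal_integral_eq_lintegral_ofReal hint
          (ae_restrict_of_forall_mem measurableSet_Icc fun x hx =>
            (inv_pos.2 (hpos x hx)).le)).symm
    _ = ENNReal.ofReal (log (b / a)) := by
        rw [integral_Icc_eq_integral_Ioc, ← intervalIntegral.integral_of_le hab,
          integral_inv_of_pos ha (ha.trans_le hab)]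

lemma ρG_prod (s t u : Set ℝ) : ρG (s ×ˢ t ×ˢ u) = volume s * (volume t * haarPos u) := by
  rw [ρG_eq_prod, Measure.prod_prod, Measure.prod_prod]

end HaarMeasure

section CalderonZygmund

variable {R s t : Set G} {A : G → ℝ}

lemma IsCZ.measureReal_pos (hR : IsCZ R) : 0 < ρG.real R := by
  obtain ⟨c, L, r, hc, hL, hr, rfl, -⟩ := hR
  have hexp : exp (-r) < exp r := exp_lt_exp.2 (by linarith)
  have hlog : 0 < log (c.2.2 * exp r / (c.2.2 * exp (-r))) := by
    rw [mul_div_mul_left _ _ hc.ne', ← exp_sub, log_exp]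
    linarith
  rw [Measure.real, ρG_prod, haarPos_Icc (by positivity) (by gcongr), volume_Icc, volume_Icc,
    ENNReal.toReal_mul, ENNReal.toReal_mul, ENNReal.toReal_ofReal hlog.le,
    ENNReal.toReal_ofReal (by linarith), ENNReal.toReal_ofReal (by linarith)]
  ring_nf at hlog ⊢
  positivity

lemma IsCZ.measure_ne_top (hR : IsCZ R) : ρG R ≠ ∞ := fun h => by
  simpa [Measure.real, h] using hR.measureReal_pos

lemma isAtomG_uniformDensity_sub {M : ℝ} (hR : IsCZ R) (hs : MeasurableSet s)
    (ht : MeasurableSet t) (hsR : s ⊆ R) (htR : t ⊆ R) (hRs : ρG.real R ≤ M * ρG.real s)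
    (hRt : ρG.real R ≤ M * ρG.real t) :
    IsAtomG (M⁻¹ • (uniformDensity ρG s - uniformDensity ρG t)) := by
  have hRpos := hR.measureReal_pos
  have hM : 0 < M := pos_of_mul_pos_left (hRpos.trans_le hRs) measureReal_nonneg
  have hpos : ∀ {u}, ρG.real R ≤ M * ρG.real u → 0 < ρG.real u := fun h =>
    pos_of_mul_pos_right (hRpos.trans_le h) hM.le
  have hint : ∀ {u}, MeasurableSet u → u ⊆ R → Integrable (uniformDensity ρG u) ρG :=
    fun hu huR => integrable_uniformDensity hu (measure_ne_top_of_subset huR hR.measure_ne_top)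
  have hle : ∀ {u}, ρG.real R ≤ M * ρG.real u →
      ∀ x, uniformDensity ρG u x ≤ M * (ρG.real R)⁻¹ := fun {u} h x =>
    (uniformDensity_le x).trans <| by
      rw [← div_eq_mul_inv, inv_le_comm₀ (hpos h) (by positivity), inv_div, div_le_iff₀' hM]
      exact h
  refine ⟨((hint hs hsR).sub (hint ht htR)).smul _, R, hR, fun x hx => ?_, ?_, ?_⟩
  · simp [uniformDensity_of_notMem (fun h => hx (hsR h)),
      uniformDensity_of_notMem (fun h => hx (htR h))]
  · rw [← ofReal_measureReal hR.measure_ne_top, ← ENNReal.ofReal_inv_of_pos hRpos,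
      eLpNorm_exponent_top]
    refine eLpNormEssSup_le_of_ae_bound (.of_forall fun x => ?_)
    rw [Pi.smul_apply, Pi.sub_apply, norm_smul, norm_inv, norm_of_nonneg hM.le,
      inv_mul_le_iff₀ hM]
    exact abs_sub_le_of_nonneg_of_le (uniformDensity_nonneg x) (hle hRs x)
      (uniformDensity_nonneg x) (hle hRt x)
  · simp only [Pi.smul_apply, Pi.sub_apply]
    rw [integral_smul, integral_sub (hint hs hsR) (hint ht htR),
      integral_uniformDensity hs (hpos hRs).ne', integral_uniformDensity ht (hpos hRt).ne',
      sub_self, smul_zero]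

lemma IsAtomG.eLpNorm_one_le (hA : IsAtomG A) : eLpNorm A 1 ρG ≤ 1 := by
  obtain ⟨hAint, R, hR, hsupp, hbound, -⟩ := hA
  have hsub : Function.support A ⊆ R := Function.support_subset_iff'.2 hsupp
  have hRne : ρG R ≠ 0 := fun h => by simpa [Measure.real, h] using hR.measureReal_pos
  calc eLpNorm A 1 ρG = eLpNorm A 1 (ρG.restrict R) :=
        (eLpNorm_restrict_eq_of_support_subset hsub).symm
    _ ≤ eLpNorm A ∞ (ρG.restrict R) * ρG R := by
        simpa using eLpNorm_le_eLpNorm_mul_rpow_measure_univ (p := 1) (q := ∞) le_top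
          hAint.1.restrict
    _ ≤ (ρG R)⁻¹ * ρG R := by
        gcongr
        exact (eLpNorm_mono_measure _ Measure.restrict_le_self).trans hbound
    _ = 1 := ENNReal.inv_mul_cancel hRne hR.measure_ne_top

lemma IsAtomG.norm_toL1_le (hA : IsAtomG A) : ‖hA.1.toL1 A‖ ≤ 1 :=
  ENNReal.toReal_le_of_le_ofReal zero_le_one <| by
    simpa using (eLpNorm_congr_ae hA.1.coeFn_toL1).trans_le hA.eLpNorm_one_le

end CalderonZygmund

section NestedBoxes

/-- The box centred at `(p.1, p.2, 1)` with side `2 e ^ (4 k)` and logarithmic height `2 (k + 1)`.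
The exponential growth of the side makes it a Calderón–Zygmund set for `k ≥ 1`. -/
def czBox (p : ℝ × ℝ) (k : ℕ) : Set G :=
  Metric.closedBall p.1 (exp (4 * k)) ×ˢ Metric.closedBall p.2 (exp (4 * k)) ×ˢ
    Icc (exp (-(k + 1))) (exp (k + 1))

/-- The uniform probability density on `czBox p k`. -/
abbrev czDensity (p : ℝ × ℝ) (k : ℕ) : G → ℝ :=
  uniformDensity ρG (czBox p k)

variable (p q : ℝ × ℝ) (k : ℕ)

lemma measurableSet_czBox : MeasurableSet (czBox p k) :=
  measurableSet_closedBall.prod (measurableSet_closedBall.prod measurableSet_Icc)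

lemma isCZ_czBox (hk : 1 ≤ k) : IsCZ (czBox p k) := by
  have hk' : (1 : ℝ) ≤ k := by exact_mod_cast hk
  refine ⟨(p.1, p.2, 1), 2 * exp (4 * k), k + 1, one_pos, by positivity, by positivity, ?_,
    fun h => by linarith, fun _ => ⟨?_, ?_⟩⟩
  · simp [czBox, Real.closedBall_eq_Icc]
  · calc 1 * exp (2 * (k + 1)) ≤ exp (4 * k) := by rw [one_mul]; exact exp_le_exp.2 (by linarith)
      _ ≤ 2 * exp (4 * k) := by linarith [exp_pos (4 * (k : ℝ))]
  · calc 2 * exp (4 * k) < exp 1 * exp (4 * k) := by gcongr; linarith [exp_one_gt_d9]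
      _ = exp (1 + 4 * k) := (exp_add _ _).symm
      _ ≤ 1 * exp (8 * (k + 1)) := by rw [one_mul]; exact exp_le_exp.2 (by linarith)

lemma measureReal_czBox : ρG.real (czBox p k) = 8 * exp (8 * k) * (k + 1) := by
  have hexp : exp (-((k : ℝ) + 1)) ≤ exp (k + 1) := exp_le_exp.2 (by linarith)
  rw [Measure.real, czBox, ρG_prod, haarPos_Icc (exp_pos _) hexp, ← exp_sub, log_exp,
    Real.volume_closedBall, Real.volume_closedBall, ENNReal.toReal_mul, ENNReal.toReal_mul,
    ENNReal.toReal_ofReal (by positivity), ENNReal.toReal_ofReal (by linarith),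
    show (8 : ℝ) * k = 4 * k + 4 * k by ring, exp_add]
  ring

lemma measureReal_czBox_succ_le :
    ρG.real (czBox p (k + 1)) ≤ 2 * exp 8 * ρG.real (czBox q k) := by
  rw [measureReal_czBox, measureReal_czBox]
  calc 8 * exp (8 * (k + 1 : ℕ)) * ((k + 1 : ℕ) + 1)
      = 8 * (exp (8 * k) * exp 8) * (k + 1 + 1) := by push_cast; rw [← exp_add]; ring_nf
    _ ≤ 8 * (exp (8 * k) * exp 8) * (2 * (k + 1)) := by gcongr; linarith
    _ = 2 * exp 8 * (8 * exp (8 * k) * (k + 1)) := by ring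

variable {p q k}

lemma czBox_subset_succ (h : dist p q ≤ exp (4 * k)) : czBox p k ⊆ czBox q (k + 1) := by
  have hside : exp (4 * k) + exp (4 * k) ≤ exp (4 * (k + 1 : ℕ)) := by
    push_cast
    rw [mul_add, exp_add]
    nlinarith [add_one_le_exp (4 * 1 : ℝ), exp_pos (4 * (k : ℝ))]
  have hball : ∀ {x y : ℝ}, dist x y ≤ dist p q →
      Metric.closedBall x (exp (4 * k)) ⊆ Metric.closedBall y (exp (4 * (k + 1 : ℕ))) :=
    fun hxy => Metric.closedBall_subset_closedBall' (by linarith)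
  refine prod_mono (hball (le_max_left _ _)) (prod_mono (hball (le_max_right _ _))
    (Icc_subset_Icc ?_ ?_)) <;> gcongr <;> simp

lemma isAtomG_zero : IsAtomG 0 :=
  ⟨integrable_zero _ _ _, czBox 0 1, isCZ_czBox 0 1 le_rfl, fun _ _ => rfl, by simp, by simp⟩

end NestedBoxes

section HardySpace

variable {f g A : G → ℝ}

lemma isH1Decomp_iff_hasSum {lam : ℕ → ℝ} {B : ℕ → G → ℝ} (hf : Integrable f ρG)
    (hB : ∀ j, IsAtomG (B j)) :
    IsH1Decomp f lam B ↔ Summable (fun j => |lam j|) ∧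
      HasSum (fun j => lam j • (hB j).1.toL1 (B j)) (hf.toL1 f) := by
  have htoL1 : ∀ j, ((hB j).1.smul (lam j)).toL1 (lam j • B j)
      = lam j • (hB j).1.toL1 (B j) := fun j => Integrable.toL1_smul' _ (hB j).1 _
  have htendsto := tendsto_eLpNorm_sub_sum_iff hf fun j => (hB j).1.smul (lam j)
  simp only [Pi.smul_apply, smul_eq_mul, htoL1] at htendsto
  rw [IsH1Decomp, htendsto, and_iff_right hB]
  refine and_congr_right fun hlam => (Summable.hasSum_iff_tendsto_nat ?_).symm
  refine Summable.of_norm_bounded hlam fun j => ?_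
  rw [norm_smul, norm_eq_abs]
  exact mul_le_of_le_one_right (abs_nonneg _) (hB j).norm_toL1_le

lemma IsH1Decomp.smul {lam : ℕ → ℝ} {B : ℕ → G → ℝ} (hf : Integrable f ρG)
    (h : IsH1Decomp f lam B) (c : ℝ) : IsH1Decomp (c • f) (c • lam) B := by
  obtain ⟨hlam, hsum⟩ := (isH1Decomp_iff_hasSum hf h.1).1 h
  refine (isH1Decomp_iff_hasSum (hf.smul c) h.1).2 ⟨?_, ?_⟩
  · simpa only [Pi.smul_apply, smul_eq_mul, abs_mul] using hlam.mul_left |c|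
  · rw [Integrable.toL1_smul' f hf c]
    simpa only [Pi.smul_apply, smul_assoc] using hsum.const_smul c

lemma exists_isH1Decomp_of_hasSum {ι : Type*} (e : ℕ ≃ ι) {lam : ι → ℝ}
    {B : ι → G → ℝ} (hf : Integrable f ρG) (hB : ∀ i, IsAtomG (B i))
    (hlam : Summable fun i => |lam i|)
    (hsum : HasSum (fun i => lam i • (hB i).1.toL1 (B i)) (hf.toL1 f)) :
    ∃ nu E, IsH1Decomp f nu E ∧ ∑' j, |nu j| = ∑' i, |lam i| :=
  ⟨lam ∘ e, B ∘ e, (isH1Decomp_iff_hasSum hf fun j => hB (e j)).2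
    ⟨e.summable_iff.2 hlam, e.hasSum_iff.2 hsum⟩, e.tsum_eq fun i => |lam i|⟩

lemma IsH1Decomp.exists_add {lam mu : ℕ → ℝ} {B D : ℕ → G → ℝ} (hf : Integrable f ρG)
    (hg : Integrable g ρG) (hfB : IsH1Decomp f lam B) (hgD : IsH1Decomp g mu D) :
    ∃ nu E, IsH1Decomp (f + g) nu E ∧ ∑' j, |nu j| = ∑' j, |lam j| + ∑' j, |mu j| := by
  obtain ⟨hlam, hsumf⟩ := (isH1Decomp_iff_hasSum hf hfB.1).1 hfB
  obtain ⟨hmu, hsumg⟩ := (isH1Decomp_iff_hasSum hg hgD.1).1 hgD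
  have hatom : ∀ i, IsAtomG (Sum.elim B D i) := Sum.rec hfB.1 hgD.1
  have hcoeff : HasSum (fun i => |Sum.elim lam mu i|) (∑' j, |lam j| + ∑' j, |mu j|) :=
    HasSum.sum hlam.hasSum hmu.hasSum
  have hsum : HasSum (fun i => Sum.elim lam mu i • (hatom i).1.toL1 (Sum.elim B D i))
      ((hf.add hg).toL1 (f + g)) := by
    rw [Integrable.toL1_add f g hf hg]
    exact HasSum.sum hsumf hsumg
  rw [← hcoeff.tsum_eq]
  exact exists_isH1Decomp_of_hasSum Equiv.natSumNatEquivNat.symm (hf.add hg) hatom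
    hcoeff.summable hsum

lemma bddBelow_H1Decomp_sums (f : G → ℝ) :
    BddBelow {s | ∃ lam A, IsH1Decomp f lam A ∧ s = ∑' j, |lam j|} :=
  ⟨0, by rintro _ ⟨lam, A, -, rfl⟩; exact tsum_nonneg fun _ => abs_nonneg _⟩

lemma IsH1Decomp.H1norm_le {lam : ℕ → ℝ} {B : ℕ → G → ℝ} (h : IsH1Decomp f lam B) :
    H1norm f ≤ ∑' j, |lam j| :=
  csInf_le (bddBelow_H1Decomp_sums f) ⟨lam, B, h, rfl⟩

lemma MemH1.nonempty_H1Decomp_sums (hf : MemH1 f) :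
    {s | ∃ lam A, IsH1Decomp f lam A ∧ s = ∑' j, |lam j|}.Nonempty :=
  let ⟨lam, A, h⟩ := hf.2
  ⟨_, lam, A, h, rfl⟩

lemma H1norm_nonneg (f : G → ℝ) : 0 ≤ H1norm f :=
  Real.sInf_nonneg <| by rintro _ ⟨lam, A, -, rfl⟩; exact tsum_nonneg fun _ => abs_nonneg _

lemma MemH1.smul (hf : MemH1 f) (c : ℝ) : MemH1 (c • f) :=
  let ⟨_, _, h⟩ := hf.2
  ⟨hf.1.smul c, _, _, h.smul hf.1 c⟩

lemma MemH1.add (hf : MemH1 f) (hg : MemH1 g) : MemH1 (f + g) :=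
  let ⟨_, _, hfB⟩ := hf.2
  let ⟨_, _, hgD⟩ := hg.2
  let ⟨nu, E, h, _⟩ := hfB.exists_add hf.1 hg.1 hgD
  ⟨hf.1.add hg.1, nu, E, h⟩

lemma MemH1.sub (hf : MemH1 f) (hg : MemH1 g) : MemH1 (f - g) := by
  simpa only [neg_one_smul, ← sub_eq_add_neg] using hf.add (hg.smul (-1))

lemma H1norm_smul_le (hf : MemH1 f) (c : ℝ) : H1norm (c • f) ≤ |c| * H1norm f := by
  rw [H1norm, H1norm, ← smul_eq_mul, ← Real.sInf_smul_of_nonneg (abs_nonneg c)]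
  refine csInf_le_csInf (bddBelow_H1Decomp_sums _) hf.nonempty_H1Decomp_sums.smul_set ?_
  rintro _ ⟨_, ⟨lam, B, h, rfl⟩, rfl⟩
  refine ⟨c • lam, B, h.smul hf.1 c, ?_⟩
  simp only [Pi.smul_apply, smul_eq_mul, abs_mul, tsum_mul_left]

lemma H1norm_add_le (hf : MemH1 f) (hg : MemH1 g) : H1norm (f + g) ≤ H1norm f + H1norm g := by
  rw [H1norm, H1norm, H1norm, ← csInf_add hf.nonempty_H1Decomp_sums (bddBelow_H1Decomp_sums f)
    hg.nonempty_H1Decomp_sums (bddBelow_H1Decomp_sums g)]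
  refine csInf_le_csInf (bddBelow_H1Decomp_sums _)
    (hf.nonempty_H1Decomp_sums.add hg.nonempty_H1Decomp_sums) ?_
  rintro _ ⟨_, ⟨lam, B, hfB, rfl⟩, _, ⟨mu, D, hgD, rfl⟩, rfl⟩
  obtain ⟨nu, E, h, hnu⟩ := hfB.exists_add hf.1 hg.1 hgD
  exact ⟨nu, E, h, hnu.symm⟩

lemma H1norm_sub_le (hf : MemH1 f) (hg : MemH1 g) : H1norm (f - g) ≤ H1norm f + H1norm g := by
  have hneg : H1norm ((-1 : ℝ) • g) ≤ H1norm g := by simpa using H1norm_smul_le hg (-1)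
  have hadd := H1norm_add_le hf (hg.smul (-1))
  rw [neg_one_smul, ← sub_eq_add_neg] at hadd
  rw [neg_one_smul] at hneg
  linarith

lemma IsAtomG.isH1Decomp_single (hA : IsAtomG A) :
    IsH1Decomp A (Pi.single 0 1) fun _ => A := by
  refine (isH1Decomp_iff_hasSum hA.1 fun _ => hA).2 ⟨?_, ?_⟩
  · exact (hasSum_single 0 fun j hj => by simp [hj]).summable
  · convert hasSum_single (f := fun j => (Pi.single 0 1 : ℕ → ℝ) j • hA.1.toL1 A) 0
      fun j hj => by simp [hj]
    simp

lemma IsAtomG.memH1 (hA : IsAtomG A) : MemH1 A :=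
  ⟨hA.1, _, _, hA.isH1Decomp_single⟩

lemma IsAtomG.H1norm_le_one (hA : IsAtomG A) : H1norm A ≤ 1 :=
  hA.isH1Decomp_single.H1norm_le.trans_eq <| by
    rw [tsum_eq_single 0 fun j hj => by simp [hj]]
    simp

lemma memH1_zero : MemH1 0 :=
  isAtomG_zero.memH1

lemma H1norm_zero : H1norm 0 = 0 :=
  le_antisymm (by simpa using H1norm_smul_le memH1_zero 0) (H1norm_nonneg 0)

lemma MemH1.finsetSum {ι : Type*} {s : Finset ι} {F : ι → G → ℝ} (hF : ∀ i ∈ s, MemH1 (F i)) :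
    MemH1 (∑ i ∈ s, F i) :=
  Finset.sum_induction F MemH1 (fun _ _ => MemH1.add) memH1_zero hF

lemma H1norm_finsetSum_le {ι : Type*} {s : Finset ι} {F : ι → G → ℝ}
    (hF : ∀ i ∈ s, MemH1 (F i)) : H1norm (∑ i ∈ s, F i) ≤ ∑ i ∈ s, H1norm (F i) :=
  Finset.le_sum_of_subadditive_on_pred H1norm MemH1 H1norm_zero.le
    (fun _ _ => H1norm_add_le) (fun _ _ => MemH1.add) F hF

end HardySpace

section LogarithmicBound

lemma IsCZ.memH1_and_H1norm_uniformDensity_sub_le {R s t : Set G} {M : ℝ} (hR : IsCZ R)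
    (hs : MeasurableSet s) (ht : MeasurableSet t) (hsR : s ⊆ R) (htR : t ⊆ R)
    (hRs : ρG.real R ≤ M * ρG.real s) (hRt : ρG.real R ≤ M * ρG.real t) :
    MemH1 (uniformDensity ρG s - uniformDensity ρG t) ∧
      H1norm (uniformDensity ρG s - uniformDensity ρG t) ≤ M := by
  have hM : 0 < M := pos_of_mul_pos_left (hR.measureReal_pos.trans_le hRs) measureReal_nonneg
  have hatom := isAtomG_uniformDensity_sub hR hs ht hsR htR hRs hRt
  rw [← smul_inv_smul₀ hM.ne' (uniformDensity ρG s - uniformDensity ρG t)]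
  refine ⟨hatom.memH1.smul M, (H1norm_smul_le hatom.memH1 M).trans ?_⟩
  rw [abs_of_pos hM]
  exact mul_le_of_le_one_right hM.le hatom.H1norm_le_one

lemma memH1_and_H1norm_czDensity_sub_le_of_dist_le {p q : ℝ × ℝ} {k : ℕ}
    (h : dist p q ≤ exp (4 * k)) :
    MemH1 (czDensity p k - czDensity q k) ∧
      H1norm (czDensity p k - czDensity q k) ≤ 2 * exp 8 :=
  (isCZ_czBox q (k + 1) k.succ_pos).memH1_and_H1norm_uniformDensity_sub_le
    (measurableSet_czBox p k) (measurableSet_czBox q k)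
    (czBox_subset_succ h) (czBox_subset_succ (by simp [exp_nonneg]))
    (measureReal_czBox_succ_le q p k) (measureReal_czBox_succ_le q q k)

lemma memH1_and_H1norm_czDensity_succ_sub_le (p : ℝ × ℝ) (k : ℕ) :
    MemH1 (czDensity p (k + 1) - czDensity p k) ∧
      H1norm (czDensity p (k + 1) - czDensity p k) ≤ 2 * exp 8 :=
  (isCZ_czBox p (k + 1) k.succ_pos).memH1_and_H1norm_uniformDensity_sub_le
    (measurableSet_czBox p (k + 1)) (measurableSet_czBox p k) subset_rfl
    (czBox_subset_succ (by simp [exp_nonneg]))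
    (le_mul_of_one_le_left measureReal_nonneg (by linarith [one_le_exp (x := 8) (by simp)]))
    (measureReal_czBox_succ_le p p k)

lemma memH1_and_H1norm_czDensity_sub_zero_le (p : ℝ × ℝ) (n : ℕ) :
    MemH1 (czDensity p n - czDensity p 0) ∧
      H1norm (czDensity p n - czDensity p 0) ≤ n * (2 * exp 8) := by
  have hmem := fun k => (memH1_and_H1norm_czDensity_succ_sub_le p k).1
  have hnorm := fun k => (memH1_and_H1norm_czDensity_succ_sub_le p k).2
  rw [← Finset.sum_range_sub fun k => czDensity p k]
  refine ⟨MemH1.finsetSum fun k _ => hmem k, ?_⟩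
  calc H1norm (∑ k ∈ Finset.range n, (czDensity p (k + 1) - czDensity p k))
      ≤ ∑ k ∈ Finset.range n, H1norm (czDensity p (k + 1) - czDensity p k) :=
        H1norm_finsetSum_le fun k _ => hmem k
    _ ≤ n * (2 * exp 8) := by
        simpa using Finset.sum_le_card_nsmul (Finset.range n) _ _ fun k _ => hnorm k

lemma memH1_and_H1norm_czDensity_zero_sub_le {p q : ℝ × ℝ} {n : ℕ} (h : dist p q ≤ exp (4 * n)) :
    MemH1 (czDensity p 0 - czDensity q 0) ∧
      H1norm (czDensity p 0 - czDensity q 0) ≤ (2 * n + 1) * (2 * exp 8) := by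
  obtain ⟨hp, hp_le⟩ := memH1_and_H1norm_czDensity_sub_zero_le p n
  obtain ⟨hq, hq_le⟩ := memH1_and_H1norm_czDensity_sub_zero_le q n
  obtain ⟨hpq, hpq_le⟩ := memH1_and_H1norm_czDensity_sub_le_of_dist_le h
  have htelescope : czDensity p 0 - czDensity q 0
      = (czDensity p n - czDensity q n) + (czDensity q n - czDensity q 0)
        - (czDensity p n - czDensity p 0) := by abel
  rw [htelescope]
  refine ⟨(hpq.add hq).sub hp, ?_⟩
  linarith [H1norm_sub_le (hpq.add hq) hp, H1norm_add_le hpq hq]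

lemma fL_eq_smul_czDensity_sub (L : ℝ) :
    fL L = (8 : ℝ) • (czDensity (L, 0) 0 - czDensity (0, 0) 0) := by
  have hmeasure : ∀ p, ρG.real (czBox p 0) = 8 := fun p => by simp [measureReal_czBox]
  have hindicator : ∀ p, (8 : ℝ) • czDensity p 0 = (czBox p 0).indicator fun _ => 1 := fun p => by
    rw [← hmeasure p, measureReal_smul_uniformDensity (by simp [hmeasure])]
  have hRL : RLset L = czBox (L, 0) 0 := by simp [RLset, czBox, Real.closedBall_eq_Icc]
  have hR0 : R0set = czBox (0, 0) 0 := by simp [R0set, czBox, Real.closedBall_eq_Icc]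
  rw [smul_sub, hindicator, hindicator, ← hRL, ← hR0]
  rfl

end LogarithmicBound

theorem fL_H1norm_upper :
    ∃ C > (0 : ℝ), ∀ L : ℝ, 2 < L → MemH1 (fL L) ∧ H1norm (fL L) ≤ C * Real.log L := by
  refine ⟨8 * (7 * (2 * exp 8)), by positivity, fun L hL => ?_⟩
  have hlog : 3 / 5 < log L := by linarith [log_two_gt_d9, log_lt_log two_pos hL]
  set n := ⌈log L⌉₊
  have hn : (2 * n + 1 : ℝ) ≤ 7 * log L := by
    linarith [Nat.ceil_lt_add_one (a := log L) (by linarith)]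
  have hdist : dist ((L, 0) : ℝ × ℝ) (0, 0) ≤ exp (4 * n) := by
    have hL' : L ≤ exp (4 * n) := by
      rw [← log_le_iff_le_exp (by linarith)]
      linarith [Nat.le_ceil (log L), n.cast_nonneg (α := ℝ)]
    simpa [Prod.dist_eq, abs_of_pos (two_pos.trans hL), exp_nonneg] using hL'
  obtain ⟨hmem, hnorm⟩ := memH1_and_H1norm_czDensity_zero_sub_le hdist
  rw [fL_eq_smul_czDensity_sub]
  refine ⟨hmem.smul 8, (H1norm_smul_le hmem 8).trans ?_⟩
  calc |8| * H1norm _ ≤ 8 * ((2 * n + 1) * (2 * exp 8)) := by rw [Nat.abs_ofNat]; gcongr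
    _ ≤ 8 * (7 * log L * (2 * exp 8)) := by gcongr
    _ = 8 * (7 * (2 * exp 8)) * log L := by ring
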